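/- arXiv:2512.17265 — 5 statements merged into one kernel-verified Lean document; each statement's English description precedes it below -/
import Mathlib

section
/- Let d_0 be the constant-zero function on S₁ × S₂ and define d_n = F(d_{n−1}) for n ≥ 1, where F is the GBSM operator. Then the sequence (d_n) is pointwise nondecreasing, every d_n is bounded above pointwise by R̄/(1−γ), and the pointwise supremum d^{1-2}(s,s') = sup_n d_n(s,s') is a fixed point of F, i.e., F(d^{1-2}) = d^{1-2}. -/
open scoped BigOperators

noncomputable section

/-- The (finite, linear-programming) 1-Wasserstein distance between probability
vectors `P` on `S₁` and `Q` on `S₂` with cost function `d`. -/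
def W1 {S₁ S₂ : Type*} [Fintype S₁] [Fintype S₂]
    (P : S₁ → ℝ) (Q : S₂ → ℝ) (d : S₁ → S₂ → ℝ) : ℝ :=
  sInf { c : ℝ | ∃ lam : S₁ → S₂ → ℝ,
    (∀ i j, 0 ≤ lam i j) ∧ (∀ i, ∑ j, lam i j = P i) ∧
    (∀ j, ∑ i, lam i j = Q j) ∧ c = ∑ i, ∑ j, lam i j * d i j }

/-- A finite Markov decision process (without its discount factor). -/
structure FinMDP (S A : Type*) [Fintype S] [Fintype A] where
  P : S → A → S → ℝ
  R : S → A → ℝ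
  P_nonneg : ∀ s a s', 0 ≤ P s a s'
  P_sum : ∀ s a, ∑ s', P s a s' = 1

variable {S₁ A₁ S₂ A₂ : Type*} [Fintype S₁] [Fintype A₁] [Fintype S₂] [Fintype A₂]

/-- `δ(d)((s,a),(s',a')) = |R₁(s,a) − R₂(s',a')| + γ·W₁(P₁(·|s,a), P₂(·|s',a'); d)` -/
def gbsmDelta (M₁ : FinMDP S₁ A₁) (M₂ : FinMDP S₂ A₂) (γ : ℝ)
    (d : S₁ → S₂ → ℝ) (s : S₁) (a : A₁) (s' : S₂) (a' : A₂) : ℝ :=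
  |M₁.R s a - M₂.R s' a'| + γ * W1 (M₁.P s a) (M₂.P s' a') d

/-- The GBSM operator `F(d)(s,s') = H(X_s, X_{s'}; δ(d))` where `H` is the Hausdorff
metric between the finite sets `X_s = {(s,a)}`, `X_{s'} = {(s',a')}`. -/
def gbsmF (M₁ : FinMDP S₁ A₁) (M₂ : FinMDP S₂ A₂) (γ : ℝ)
    (d : S₁ → S₂ → ℝ) : S₁ → S₂ → ℝ :=
  fun s s' =>
    max (⨆ a : A₁, ⨅ a' : A₂, gbsmDelta M₁ M₂ γ d s a s' a')
        (⨅ a : A₁, ⨆ a' : A₂, gbsmDelta M₁ M₂ γ d s a s' a')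

/-- The GBSM: pointwise supremum of the iterates of `gbsmF` from the zero function. -/
def gbsm (M₁ : FinMDP S₁ A₁) (M₂ : FinMDP S₂ A₂) (γ : ℝ) : S₁ → S₂ → ℝ :=
  fun s s' => ⨆ n : ℕ, (gbsmF M₁ M₂ γ)^[n] (fun _ _ => 0) s s'


theorem W1_le_add {S₁ S₂ : Type*} [Fintype S₁] [Fintype S₂]
    (P : S₁ → ℝ) (Q : S₂ → ℝ) (hP : ∀ i, 0 ≤ P i) (hQ : ∀ j, 0 ≤ Q j)
    (hP1 : ∑ i, P i = 1) (hQ1 : ∑ j, Q j = 1) (d d' : S₁ → S₂ → ℝ) (ε : ℝ)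
    (h : ∀ i j, d i j ≤ d' i j + ε) : W1 P Q d ≤ W1 P Q d' + ε := by
  rw [← sub_le_iff_le_add]
  unfold W1
  apply le_csInf
  · refine ⟨_, fun i j => P i * Q j, fun i j => mul_nonneg (hP i) (hQ j), ?_, ?_, rfl⟩
    · intro i; rw [← Finset.mul_sum, hQ1, mul_one]
    · intro j; rw [← Finset.sum_mul, hP1, one_mul]
  · rintro c ⟨lam, h0, h1, h2, rfl⟩
    have key : ∀ (lam : S₁ → S₂ → ℝ), (∀ i j, 0 ≤ lam i j) → (∀ i, ∑ j, lam i j = P i) →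
        ∀ (e e' : S₁ → S₂ → ℝ) (c : ℝ), (∀ i j, e i j ≤ e' i j + c) →
        ∑ i, ∑ j, lam i j * e i j ≤ ∑ i, ∑ j, lam i j * e' i j + c := by
      intro lam h0 h1 e e' c he
      have hs : ∑ i, ∑ j, lam i j * c = c := by
        simp_rw [← Finset.sum_mul, h1]
        rw [hP1, one_mul]
      calc ∑ i, ∑ j, lam i j * e i j ≤ ∑ i, ∑ j, (lam i j * e' i j + lam i j * c) := by
            refine Finset.sum_le_sum fun i _ => Finset.sum_le_sum fun j _ => ?_
            rw [← mul_add]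
            exact mul_le_mul_of_nonneg_left (he i j) (h0 i j)
        _ = _ := by simp_rw [Finset.sum_add_distrib]; rw [hs]
    rw [sub_le_iff_le_add]
    refine le_trans (csInf_le ?_ ⟨lam, h0, h1, h2, rfl⟩) (key lam h0 h1 d d' ε h)
    refine ⟨-(∑ i, ∑ j, |d i j|), ?_⟩
    rintro c ⟨mu, m0, m1, m2, rfl⟩
    have := key mu m0 m1 (fun _ _ => 0) d (∑ i, ∑ j, |d i j|) (by
      intro i j
      have a1 : |d i j| ≤ ∑ j, |d i j| :=
        Finset.single_le_sum (f := fun j => |d i j|) (fun _ _ => abs_nonneg _) (Finset.mem_univ j)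
      have a2 : ∑ j, |d i j| ≤ ∑ i, ∑ j, |d i j| :=
        Finset.single_le_sum (f := fun i => ∑ j, |d i j|)
          (fun _ _ => Finset.sum_nonneg fun _ _ => abs_nonneg _) (Finset.mem_univ i)
      have := neg_abs_le (d i j)
      linarith)
    simp only [mul_zero, Finset.sum_const_zero] at this
    linarith

theorem W1_zero {S₁ S₂ : Type*} [Fintype S₁] [Fintype S₂]
    (P : S₁ → ℝ) (Q : S₂ → ℝ) : W1 P Q (fun _ _ => 0) = 0 := by
  unfold W1
  apply le_antisymm
  · apply Real.sInf_nonpos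
    rintro c ⟨lam, _, _, _, rfl⟩
    simp
  · apply Real.sInf_nonneg
    rintro c ⟨lam, _, _, _, rfl⟩
    simp

theorem haus_le_add {A B : Type*} [Fintype A] [Fintype B] [Nonempty A] [Nonempty B]
    (f g : A → B → ℝ) (c : ℝ) (h : ∀ a b, f a b ≤ g a b + c) :
    max (⨆ a, ⨅ b, f a b) (⨅ a, ⨆ b, f a b) ≤ max (⨆ a, ⨅ b, g a b) (⨅ a, ⨆ b, g a b) + c := by
  rw [← max_add_add_right]
  apply max_le_max
  · apply ciSup_le
    intro a
    have : (⨅ b, f a b) - c ≤ ⨅ b, g a b := le_ciInf fun b => by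
      have := ciInf_le (Set.finite_range (f a)).bddBelow b
      linarith [h a b]
    have := le_ciSup (f := fun a => ⨅ b, g a b) (Set.finite_range _).bddAbove a
    linarith
  · rw [← sub_le_iff_le_add]
    apply le_ciInf
    intro a
    have h1 : (⨆ b, f a b) ≤ (⨆ b, g a b) + c := ciSup_le fun b => by
      have := le_ciSup (Set.finite_range (g a)).bddAbove b
      linarith [h a b]
    have := ciInf_le (f := fun a => ⨆ b, f a b) (Set.finite_range _).bddBelow a
    linarith

theorem gbsmF_le_add [Nonempty A₁] [Nonempty A₂]
    (M₁ : FinMDP S₁ A₁) (M₂ : FinMDP S₂ A₂) (γ : ℝ) (hγ0 : 0 ≤ γ)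
    (d d' : S₁ → S₂ → ℝ) (ε : ℝ) (h : ∀ i j, d i j ≤ d' i j + ε) (s : S₁) (s' : S₂) :
    gbsmF M₁ M₂ γ d s s' ≤ gbsmF M₁ M₂ γ d' s s' + γ * ε := by
  apply haus_le_add
  intro a b
  unfold gbsmDelta
  have := mul_le_mul_of_nonneg_left (W1_le_add (M₁.P s a) (M₂.P s' b) (M₁.P_nonneg s a)
    (M₂.P_nonneg s' b) (M₁.P_sum s a) (M₂.P_sum s' b) d d' ε h) hγ0
  linarith

theorem gbsmF_zero_nonneg [Nonempty A₁] [Nonempty A₂]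
    (M₁ : FinMDP S₁ A₁) (M₂ : FinMDP S₂ A₂) (γ : ℝ) (s : S₁) (s' : S₂) :
    0 ≤ gbsmF M₁ M₂ γ (fun _ _ => 0) s s' := by
  have := haus_le_add (fun _ _ => (0:ℝ))
    (fun a a' => gbsmDelta M₁ M₂ γ (fun _ _ => 0) s a s' a') 0 (by
      intro a b
      simp only [gbsmDelta, W1_zero]
      simp)
  simpa [gbsmF] using this

theorem gbsmF_zero_le [Nonempty A₁] [Nonempty A₂]
    (M₁ : FinMDP S₁ A₁) (M₂ : FinMDP S₂ A₂) (γ Rbar : ℝ)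
    (hR₁ : ∀ s a, 0 ≤ M₁.R s a ∧ M₁.R s a ≤ Rbar)
    (hR₂ : ∀ s a, 0 ≤ M₂.R s a ∧ M₂.R s a ≤ Rbar) (s : S₁) (s' : S₂) :
    gbsmF M₁ M₂ γ (fun _ _ => 0) s s' ≤ Rbar := by
  have := haus_le_add 
    (fun a a' => gbsmDelta M₁ M₂ γ (fun _ _ => 0) s a s' a') (fun _ _ => (0:ℝ)) Rbar (by
      intro a b
      simp only [gbsmDelta, W1_zero]
      have h1 := hR₁ s a
      have h2 := hR₂ s' b
      rw [mul_zero, add_zero, zero_add, abs_le]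
      constructor <;> linarith)
  simpa [gbsmF] using this

/-- the GBSM iterates from the zero function are pointwise nondecreasing,
uniformly bounded by `R̄/(1−γ)`, and their pointwise supremum is a fixed point of the
GBSM operator. -/
theorem gbsm_exists
    [Nonempty S₁] [Nonempty A₁] [Nonempty S₂] [Nonempty A₂]
    (M₁ : FinMDP S₁ A₁) (M₂ : FinMDP S₂ A₂) (γ Rbar : ℝ)
    (hγ0 : 0 ≤ γ) (hγ1 : γ < 1) (hRbar : 0 < Rbar)
    (hR₁ : ∀ s a, 0 ≤ M₁.R s a ∧ M₁.R s a ≤ Rbar)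
    (hR₂ : ∀ s a, 0 ≤ M₂.R s a ∧ M₂.R s a ≤ Rbar) :
    (∀ (n : ℕ) (s : S₁) (s' : S₂),
        (gbsmF M₁ M₂ γ)^[n] (fun _ _ => 0) s s' ≤
          (gbsmF M₁ M₂ γ)^[n + 1] (fun _ _ => 0) s s') ∧
    (∀ (n : ℕ) (s : S₁) (s' : S₂),
        (gbsmF M₁ M₂ γ)^[n] (fun _ _ => 0) s s' ≤ Rbar / (1 - γ)) ∧
    gbsmF M₁ M₂ γ (gbsm M₁ M₂ γ) = gbsm M₁ M₂ γ := by
  have mono : ∀ (n : ℕ) (s : S₁) (s' : S₂),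
        (gbsmF M₁ M₂ γ)^[n] (fun _ _ => 0) s s' ≤
          (gbsmF M₁ M₂ γ)^[n + 1] (fun _ _ => 0) s s' := by
    intro n
    induction n with
    | zero => intro s s'; exact gbsmF_zero_nonneg M₁ M₂ γ s s'
    | succ n ih =>
      intro s s'
      rw [Function.iterate_succ_apply', Function.iterate_succ_apply' _ (n + 1)]
      have := gbsmF_le_add M₁ M₂ γ hγ0 _ _ 0 (fun i j => (ih i j).trans (add_zero _).ge) s s'
      simpa using this
  have bdd : ∀ (n : ℕ) (s : S₁) (s' : S₂),
        (gbsmF M₁ M₂ γ)^[n] (fun _ _ => 0) s s' ≤ Rbar / (1 - γ) := by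
    have h1 : 0 < 1 - γ := by linarith
    intro n
    induction n with
    | zero => intro s s'; exact (div_pos hRbar h1).le
    | succ n ih =>
      intro s s'
      rw [Function.iterate_succ_apply']
      have a := gbsmF_le_add M₁ M₂ γ hγ0 _ (fun _ _ => 0) (Rbar / (1 - γ))
        (fun i j => (ih i j).trans (zero_add _).ge) s s'
      have b := gbsmF_zero_le M₁ M₂ γ Rbar hR₁ hR₂ s s'
      have c : Rbar + γ * (Rbar / (1 - γ)) = Rbar / (1 - γ) := by field_simp; ring
      linarith
  refine ⟨mono, bdd, ?_⟩
  have hba : ∀ s s', BddAbove (Set.range fun n : ℕ =>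
      (gbsmF M₁ M₂ γ)^[n] (fun _ _ => 0) s s') := by
    intro s s'
    refine ⟨Rbar / (1 - γ), ?_⟩
    rintro _ ⟨n, rfl⟩
    exact bdd n s s'
  have hle : ∀ n s s', (gbsmF M₁ M₂ γ)^[n] (fun _ _ => 0) s s' ≤ gbsm M₁ M₂ γ s s' :=
    fun n s s' => le_ciSup (hba s s') n
  funext s s'
  apply le_antisymm
  · apply le_of_forall_pos_le_add
    intro ε hε
    have hex : ∀ p : S₁ × S₂, ∃ n : ℕ,
        gbsm M₁ M₂ γ p.1 p.2 - ε < (gbsmF M₁ M₂ γ)^[n] (fun _ _ => 0) p.1 p.2 := by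
      intro p
      apply exists_lt_of_lt_ciSup
      change gbsm M₁ M₂ γ p.1 p.2 - ε < gbsm M₁ M₂ γ p.1 p.2
      linarith
    choose N hN using hex
    have hm : ∀ i j, Monotone fun n : ℕ => (gbsmF M₁ M₂ γ)^[n] (fun _ _ => 0) i j :=
      fun i j => monotone_nat_of_le_succ fun n => mono n i j
    have a := gbsmF_le_add M₁ M₂ γ hγ0 (gbsm M₁ M₂ γ)
      ((gbsmF M₁ M₂ γ)^[Finset.univ.sup N] (fun _ _ => 0)) ε (by
        intro i j
        have h1 := hN (i, j)
        have h2 := hm i j (Finset.le_sup (f := N) (Finset.mem_univ (i, j)))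
        simp only at h1 h2
        linarith) s s'
    rw [← Function.iterate_succ_apply' (gbsmF M₁ M₂ γ)] at a
    have b := hle (Finset.univ.sup N).succ s s'
    have c : γ * ε ≤ ε := by nlinarith
    linarith
  · apply ciSup_le
    intro n
    refine (mono n s s').trans ?_
    rw [Function.iterate_succ_apply']
    have := gbsmF_le_add M₁ M₂ γ hγ0 _ _ 0 (fun i j => (hle n i j).trans (add_zero _).ge) s s'
    simpa using this

end
end

section
/- Let d^{1-2} be the GBSM between finite MDPs M₁ and M₂, i.e., the pointwise supremum of the iterates d_0 = 0, d_n = F(d_{n−1}) of the GBSM operator F. If V₁* : S₁ → ℝ and V₂* : S₂ → ℝ satisfy the Bellman optimality equations V_i*(s) = max_{a∈A_i} { R_i(s,a) + γ·Σ_{s̃} P_i(s̃|s,a)·V_i*(s̃) } in M₁ and M₂ respectively, then |V₁*(s) − V₂*(s')| ≤ d^{1-2}(s,s') for every (s,s') ∈ S₁ × S₂. -/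
open scoped BigOperators

noncomputable section

variable {S₁ A₁ S₂ A₂ : Type*} [Fintype S₁] [Fintype A₁] [Fintype S₂] [Fintype A₂]

theorem W1_le_aux {P : S₁ → ℝ} {Q : S₂ → ℝ} {d : S₁ → S₂ → ℝ} (hP : ∀ i, 0 ≤ P i)
    (hQ : ∀ j, 0 ≤ Q j) (hP1 : ∑ i, P i = 1) (hQ1 : ∑ j, Q j = 1) (K : ℝ)
    (hd0 : ∀ i j, 0 ≤ d i j) (hd : ∀ i j, d i j ≤ K) : W1 P Q d ≤ K := by
  have h1 : W1 P Q d ≤ ∑ i, ∑ j, (P i * Q j) * d i j := by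
    refine csInf_le ⟨0, ?_⟩ ⟨fun i j => P i * Q j, fun i j => mul_nonneg (hP i) (hQ j), ?_, ?_, rfl⟩
    · rintro c ⟨lam, h0, _, _, rfl⟩
      exact Finset.sum_nonneg fun i _ => Finset.sum_nonneg fun j _ => mul_nonneg (h0 i j) (hd0 i j)
    · intro i
      rw [← Finset.mul_sum, hQ1, mul_one]
    · intro j
      rw [← Finset.sum_mul, hP1, one_mul]
  have h2 : ∑ i, ∑ j, (P i * Q j) * d i j ≤ ∑ i, ∑ j, (P i * Q j) * K :=
    Finset.sum_le_sum fun i _ => Finset.sum_le_sum fun j _ =>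
      mul_le_mul_of_nonneg_left (hd i j) (mul_nonneg (hP i) (hQ j))
  have h3 : ∑ i, ∑ j, (P i * Q j) * K = K := by
    simp_rw [← Finset.sum_mul, ← Finset.mul_sum, hQ1, mul_one, hP1, one_mul]
  linarith

theorem W1_nonneg_aux {P : S₁ → ℝ} {Q : S₂ → ℝ} {d : S₁ → S₂ → ℝ}
    (hd0 : ∀ i j, 0 ≤ d i j) : 0 ≤ W1 P Q d := by
  refine Real.sInf_nonneg ?_
  rintro c ⟨lam, h0, _, _, rfl⟩
  exact Finset.sum_nonneg fun i _ => Finset.sum_nonneg fun j _ => mul_nonneg (h0 i j) (hd0 i j)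

theorem W1_ge_aux {P : S₁ → ℝ} {Q : S₂ → ℝ} {d : S₁ → S₂ → ℝ} (hP : ∀ i, 0 ≤ P i)
    (hQ : ∀ j, 0 ≤ Q j) (hP1 : ∑ i, P i = 1) (hQ1 : ∑ j, Q j = 1) (f : S₁ → ℝ) (g : S₂ → ℝ)
    (K : ℝ) (h : ∀ i j, |f i - g j| ≤ d i j + K) :
    |∑ i, P i * f i - ∑ j, Q j * g j| ≤ W1 P Q d + K := by
  rw [← sub_le_iff_le_add]
  refine le_csInf ⟨_, fun i j => P i * Q j, fun i j => mul_nonneg (hP i) (hQ j), ?_, ?_, rfl⟩ ?_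
  · intro i
    rw [← Finset.mul_sum, hQ1, mul_one]
  · intro j
    rw [← Finset.sum_mul, hP1, one_mul]
  · rintro c ⟨lam, h0, hl, hr, rfl⟩
    have e1 : ∑ i, P i * f i = ∑ i, ∑ j, lam i j * f i := by
      simp_rw [← Finset.sum_mul, hl]
    have e2 : ∑ j, Q j * g j = ∑ i, ∑ j, lam i j * g j := by
      rw [Finset.sum_comm]
      simp_rw [← Finset.sum_mul, hr]
    have e3 : ∑ i, ∑ j, lam i j * K = K := by
      simp_rw [← Finset.sum_mul, hl, hP1, one_mul]
    have e4 : |∑ i, P i * f i - ∑ j, Q j * g j| ≤ ∑ i, ∑ j, lam i j * (d i j + K) := by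
      rw [e1, e2, ← Finset.sum_sub_distrib]
      refine (Finset.abs_sum_le_sum_abs _ _).trans (Finset.sum_le_sum fun i _ => ?_)
      rw [← Finset.sum_sub_distrib]
      refine (Finset.abs_sum_le_sum_abs _ _).trans (Finset.sum_le_sum fun j _ => ?_)
      rw [← mul_sub, abs_mul, abs_of_nonneg (h0 i j)]
      exact mul_le_mul_of_nonneg_left (h i j) (h0 i j)
    simp_rw [mul_add, Finset.sum_add_distrib] at e4
    rw [e3] at e4
    linarith

theorem gbsmF_bounds_aux [Nonempty A₁] [Nonempty A₂]
    (M₁ : FinMDP S₁ A₁) (M₂ : FinMDP S₂ A₂) (γ Rbar : ℝ)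
    (hγ0 : 0 ≤ γ) (hγ1 : γ < 1)
    (hR₁ : ∀ s a, 0 ≤ M₁.R s a ∧ M₁.R s a ≤ Rbar)
    (hR₂ : ∀ s a, 0 ≤ M₂.R s a ∧ M₂.R s a ≤ Rbar) (d : S₁ → S₂ → ℝ)
    (hd : ∀ s s', 0 ≤ d s s' ∧ d s s' ≤ Rbar / (1 - γ)) (s : S₁) (s' : S₂) :
    0 ≤ gbsmF M₁ M₂ γ d s s' ∧ gbsmF M₁ M₂ γ d s s' ≤ Rbar / (1 - γ) := by
  have hδ0 : ∀ a a', 0 ≤ gbsmDelta M₁ M₂ γ d s a s' a' := fun a a' =>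
    add_nonneg (abs_nonneg _) (mul_nonneg hγ0 (W1_nonneg_aux fun i j => (hd i j).1))
  have hδ1 : ∀ a a', gbsmDelta M₁ M₂ γ d s a s' a' ≤ Rbar / (1 - γ) := fun a a' => by
    have h1 : |M₁.R s a - M₂.R s' a'| ≤ Rbar := by
      have := hR₁ s a
      have := hR₂ s' a'
      rw [abs_le]
      constructor <;> linarith
    have h2 := mul_le_mul_of_nonneg_left (W1_le_aux (M₁.P_nonneg s a) (M₂.P_nonneg s' a')
      (M₁.P_sum s a) (M₂.P_sum s' a') _ (fun i j => (hd i j).1) (fun i j => (hd i j).2)) hγ0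
    have h3 : Rbar + γ * (Rbar / (1 - γ)) = Rbar / (1 - γ) := by
      have : 1 - γ ≠ 0 := by linarith
      field_simp
      ring
    unfold gbsmDelta
    linarith
  constructor
  · exact le_max_of_le_left (Real.iSup_nonneg fun a => Real.iInf_nonneg fun a' => hδ0 a a')
  · refine max_le (ciSup_le fun a => ?_) ?_
    · obtain ⟨a'⟩ := ‹Nonempty A₂›
      exact (ciInf_le (Set.finite_range _).bddBelow a').trans (hδ1 a a')
    · obtain ⟨a⟩ := ‹Nonempty A₁›
      exact (ciInf_le (Set.finite_range _).bddBelow a).trans (ciSup_le fun a' => hδ1 a a')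

theorem gbsm_step_aux [Nonempty A₁] [Nonempty A₂]
    (M₁ : FinMDP S₁ A₁) (M₂ : FinMDP S₂ A₂) (γ : ℝ)
    (hγ0 : 0 ≤ γ) (V₁ : S₁ → ℝ) (V₂ : S₂ → ℝ)
    (hV₁ : ∀ s, V₁ s = ⨆ a : A₁, (M₁.R s a + γ * ∑ t, M₁.P s a t * V₁ t))
    (hV₂ : ∀ s', V₂ s' = ⨆ a : A₂, (M₂.R s' a + γ * ∑ t, M₂.P s' a t * V₂ t))
    (d : S₁ → S₂ → ℝ) (K : ℝ) (h : ∀ s s', |V₁ s - V₂ s'| ≤ d s s' + K) (s : S₁) (s' : S₂) :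
    |V₁ s - V₂ s'| ≤ gbsmF M₁ M₂ γ d s s' + γ * K := by
  have hQ : ∀ a a', |(M₁.R s a + γ * ∑ t, M₁.P s a t * V₁ t)
      - (M₂.R s' a' + γ * ∑ t, M₂.P s' a' t * V₂ t)| ≤ gbsmDelta M₁ M₂ γ d s a s' a' + γ * K := by
    intro a a'
    have h2 := mul_le_mul_of_nonneg_left (W1_ge_aux (M₁.P_nonneg s a) (M₂.P_nonneg s' a')
      (M₁.P_sum s a) (M₂.P_sum s' a') V₁ V₂ K h) hγ0
    have h3 := abs_add_le (M₁.R s a - M₂.R s' a')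
      (γ * (∑ t, M₁.P s a t * V₁ t - ∑ t, M₂.P s' a' t * V₂ t))
    rw [abs_mul, abs_of_nonneg hγ0] at h3
    unfold gbsmDelta
    rw [show ∀ x y z w : ℝ, (x + γ * y) - (z + γ * w) = (x - z) + γ * (y - w) by intros; ring]
    linarith
  have hle₁ : ∀ a, M₁.R s a + γ * ∑ t, M₁.P s a t * V₁ t ≤ V₁ s := fun a => by
    rw [hV₁ s]
    exact le_ciSup (f := fun a => M₁.R s a + γ * ∑ t, M₁.P s a t * V₁ t)
      (Set.finite_range _).bddAbove a
  have hle₂ : ∀ a, M₂.R s' a + γ * ∑ t, M₂.P s' a t * V₂ t ≤ V₂ s' := fun a => by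
    rw [hV₂ s']
    exact le_ciSup (f := fun a => M₂.R s' a + γ * ∑ t, M₂.P s' a t * V₂ t)
      (Set.finite_range _).bddAbove a
  rw [abs_le]
  constructor
  · obtain ⟨a', ha'⟩ := exists_eq_ciSup_of_finite
      (f := fun a => M₂.R s' a + γ * ∑ t, M₂.P s' a t * V₂ t)
    rw [← hV₂ s'] at ha'
    obtain ⟨a, ha⟩ := exists_eq_ciInf_of_finite
      (f := fun a : A₁ => ⨆ a' : A₂, gbsmDelta M₁ M₂ γ d s a s' a')
    have h1 : gbsmDelta M₁ M₂ γ d s a s' a' ≤ gbsmF M₁ M₂ γ d s s' := by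
      refine le_max_of_le_right ?_
      rw [← ha]
      exact le_ciSup (f := fun a' => gbsmDelta M₁ M₂ γ d s a s' a') (Set.finite_range _).bddAbove a'
    have h2 := (abs_le.1 (hQ a a')).1
    have h3 := hle₁ a
    linarith
  · obtain ⟨a, ha⟩ := exists_eq_ciSup_of_finite
      (f := fun a => M₁.R s a + γ * ∑ t, M₁.P s a t * V₁ t)
    rw [← hV₁ s] at ha
    obtain ⟨a', ha'⟩ := exists_eq_ciInf_of_finite
      (f := fun a' : A₂ => gbsmDelta M₁ M₂ γ d s a s' a')
    have h1 : gbsmDelta M₁ M₂ γ d s a s' a' ≤ gbsmF M₁ M₂ γ d s s' := by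
      refine le_max_of_le_left ?_
      rw [ha']
      exact le_ciSup (f := fun a => ⨅ a' : A₂, gbsmDelta M₁ M₂ γ d s a s' a')
        (Set.finite_range _).bddAbove a
    have h2 := (abs_le.1 (hQ a a')).2
    have h3 := hle₂ a'
    linarith

/-- the GBSM bounds the difference of optimal value functions. -/
theorem gbsm_optimal_value_bound
    [Nonempty S₁] [Nonempty A₁] [Nonempty S₂] [Nonempty A₂]
    (M₁ : FinMDP S₁ A₁) (M₂ : FinMDP S₂ A₂) (γ Rbar : ℝ)
    (hγ0 : 0 ≤ γ) (hγ1 : γ < 1) (hRbar : 0 < Rbar)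
    (hR₁ : ∀ s a, 0 ≤ M₁.R s a ∧ M₁.R s a ≤ Rbar)
    (hR₂ : ∀ s a, 0 ≤ M₂.R s a ∧ M₂.R s a ≤ Rbar)
    (V₁ : S₁ → ℝ) (V₂ : S₂ → ℝ)
    (hV₁ : ∀ s, V₁ s = ⨆ a : A₁, (M₁.R s a + γ * ∑ t, M₁.P s a t * V₁ t))
    (hV₂ : ∀ s', V₂ s' = ⨆ a : A₂, (M₂.R s' a + γ * ∑ t, M₂.P s' a t * V₂ t)) :
    ∀ (s : S₁) (s' : S₂), |V₁ s - V₂ s'| ≤ gbsm M₁ M₂ γ s s' := by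
  have hb : ∀ n : ℕ, ∀ s s', 0 ≤ (gbsmF M₁ M₂ γ)^[n] (fun _ _ => 0) s s' ∧
      (gbsmF M₁ M₂ γ)^[n] (fun _ _ => 0) s s' ≤ Rbar / (1 - γ) := by
    intro n
    induction n with
    | zero =>
      intro s s'
      exact ⟨le_refl _, div_nonneg hRbar.le (by linarith)⟩
    | succ n ih =>
      rw [Function.iterate_succ_apply']
      exact gbsmF_bounds_aux M₁ M₂ γ Rbar hγ0 hγ1 hR₁ hR₂ _ ih
  obtain ⟨C, hC⟩ := (Set.finite_range fun p : S₁ × S₂ => |V₁ p.1 - V₂ p.2|).bddAbove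
  have hk : ∀ n : ℕ, ∀ s s', |V₁ s - V₂ s'| ≤
      (gbsmF M₁ M₂ γ)^[n] (fun _ _ => 0) s s' + γ ^ n * C := by
    intro n
    induction n with
    | zero =>
      intro s s'
      have := hC ⟨(s, s'), rfl⟩
      simpa using this
    | succ n ih =>
      intro s s'
      rw [Function.iterate_succ_apply', pow_succ', mul_assoc]
      exact gbsm_step_aux M₁ M₂ γ hγ0 V₁ V₂ hV₁ hV₂ _ _ ih s s'
  intro s s'
  have hlim : Filter.Tendsto (fun n : ℕ => gbsm M₁ M₂ γ s s' + γ ^ n * C) Filter.atTop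
      (nhds (gbsm M₁ M₂ γ s s' + 0 * C)) :=
    ((tendsto_pow_atTop_nhds_zero_of_lt_one hγ0 hγ1).mul_const C).const_add _
  rw [zero_mul, add_zero] at hlim
  refine ge_of_tendsto' hlim fun n => (hk n s s').trans ?_
  have : (gbsmF M₁ M₂ γ)^[n] (fun _ _ => 0) s s' ≤ gbsm M₁ M₂ γ s s' :=
    le_ciSup (f := fun n : ℕ => (gbsmF M₁ M₂ γ)^[n] (fun _ _ => 0) s s')
      ⟨Rbar / (1 - γ), by rintro _ ⟨n, rfl⟩; exact (hb n s s').2⟩ n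
  linarith

end
end

section
/- Let M₁, M₂, M₃ be finite MDPs with the same discount factor γ ∈ [0,1) and rewards in [0,R̄], and let d^{1-2}, d^{1-3}, d^{3-2} be the pairwise GBSMs (each the pointwise supremum of the iterates of the corresponding GBSM operator from the zero function). Then for all s ∈ S₁, s' ∈ S₂, s'' ∈ S₃: d^{1-2}(s,s') ≤ d^{1-3}(s,s'') + d^{3-2}(s'',s'). -/
open scoped BigOperators

noncomputable section

variable {S₁ A₁ S₂ A₂ : Type*} [Fintype S₁] [Fintype A₁] [Fintype S₂] [Fintype A₂]

def IsCpl {X Y : Type*} [Fintype X] [Fintype Y] (P : X → ℝ) (Q : Y → ℝ) (lam : X → Y → ℝ) : Prop :=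
  (∀ i j, 0 ≤ lam i j) ∧ (∀ i, ∑ j, lam i j = P i) ∧ (∀ j, ∑ i, lam i j = Q j)

theorem W1_le {X Y : Type*} [Fintype X] [Fintype Y] {P : X → ℝ} {Q : Y → ℝ} {lam d : X → Y → ℝ}
    (hd : ∀ i j, 0 ≤ d i j) (h : IsCpl P Q lam) : W1 P Q d ≤ ∑ i, ∑ j, lam i j * d i j := by
  apply csInf_le
  · refine ⟨0, ?_⟩
    rintro c ⟨l, h0, -, -, rfl⟩
    exact Finset.sum_nonneg fun i _ => Finset.sum_nonneg fun j _ => mul_nonneg (h0 i j) (hd i j)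
  · exact ⟨lam, h.1, h.2.1, h.2.2, rfl⟩

theorem W1_nonneg {X Y : Type*} [Fintype X] [Fintype Y] {P : X → ℝ} {Q : Y → ℝ} {d : X → Y → ℝ}
    (hd : ∀ i j, 0 ≤ d i j) : 0 ≤ W1 P Q d := by
  apply Real.sInf_nonneg
  rintro c ⟨l, h0, -, -, rfl⟩
  exact Finset.sum_nonneg fun i _ => Finset.sum_nonneg fun j _ => mul_nonneg (h0 i j) (hd i j)

theorem cpl_prod {X Y : Type*} [Fintype X] [Fintype Y] {P : X → ℝ} {Q : Y → ℝ}
    (hP : ∀ i, 0 ≤ P i) (hQ : ∀ i, 0 ≤ Q i) (hP1 : ∑ i, P i = 1) (hQ1 : ∑ i, Q i = 1) :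
    IsCpl P Q (fun i j => P i * Q j) := by
  refine ⟨fun i j => mul_nonneg (hP i) (hQ j), fun i => ?_, fun j => ?_⟩
  · rw [← Finset.mul_sum, hQ1, mul_one]
  · rw [← Finset.sum_mul, hP1, one_mul]

theorem le_W1 {X Y : Type*} [Fintype X] [Fintype Y] {P : X → ℝ} {Q : Y → ℝ} {d : X → Y → ℝ} {b : ℝ}
    (hP : ∀ i, 0 ≤ P i) (hQ : ∀ i, 0 ≤ Q i) (hP1 : ∑ i, P i = 1) (hQ1 : ∑ i, Q i = 1)
    (h : ∀ lam, IsCpl P Q lam → b ≤ ∑ i, ∑ j, lam i j * d i j) : b ≤ W1 P Q d := by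
  apply le_csInf
  · obtain ⟨h1, h2, h3⟩ := cpl_prod hP hQ hP1 hQ1
    exact ⟨_, _, h1, h2, h3, rfl⟩
  · rintro c ⟨l, h1, h2, h3, rfl⟩
    exact h l ⟨h1, h2, h3⟩

theorem W1_le_const {X Y : Type*} [Fintype X] [Fintype Y] {P : X → ℝ} {Q : Y → ℝ} {d : X → Y → ℝ}
    {C : ℝ} (hP : ∀ i, 0 ≤ P i) (hQ : ∀ i, 0 ≤ Q i) (hP1 : ∑ i, P i = 1) (hQ1 : ∑ i, Q i = 1)
    (hd : ∀ i j, 0 ≤ d i j) (hC : ∀ i j, d i j ≤ C) : W1 P Q d ≤ C := by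
  refine (W1_le hd (cpl_prod hP hQ hP1 hQ1)).trans ?_
  calc ∑ i, ∑ j, P i * Q j * d i j ≤ ∑ i, ∑ j, P i * Q j * C :=
        Finset.sum_le_sum fun i _ => Finset.sum_le_sum fun j _ =>
          mul_le_mul_of_nonneg_left (hC i j) (mul_nonneg (hP i) (hQ j))
    _ = C := by
        simp_rw [← Finset.sum_mul, ← Finset.mul_sum, hQ1, mul_one, hP1, one_mul]

theorem W1_triangle {X Y Z : Type*} [Fintype X] [Fintype Y] [Fintype Z]
    {P : X → ℝ} {Q : Y → ℝ} {T : Z → ℝ}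
    {d : X → Y → ℝ} {e : X → Z → ℝ} {f : Z → Y → ℝ}
    (hP : ∀ i, 0 ≤ P i) (hQ : ∀ i, 0 ≤ Q i) (hT : ∀ i, 0 ≤ T i)
    (hP1 : ∑ i, P i = 1) (hQ1 : ∑ i, Q i = 1) (hT1 : ∑ i, T i = 1)
    (hd : ∀ i j, 0 ≤ d i j) (h : ∀ i j k, d i j ≤ e i k + f k j) :
    W1 P Q d ≤ W1 P T e + W1 T Q f := by
  rw [← sub_le_iff_le_add]
  refine le_W1 hP hT hP1 hT1 fun l hl => ?_
  rw [sub_le_comm]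
  refine le_W1 hT hQ hT1 hQ1 fun m hm => ?_
  rw [sub_le_iff_le_add]
  obtain ⟨l0, l1, l2⟩ := hl
  obtain ⟨m0, m1, m2⟩ := hm
  have hl0 : ∀ k, T k = 0 → ∀ i, l i k = 0 := fun k hk i => by
    have := l2 k
    rw [hk, Finset.sum_eq_zero_iff_of_nonneg (fun i _ => l0 i k)] at this
    exact this i (Finset.mem_univ _)
  have hm0 : ∀ k, T k = 0 → ∀ j, m k j = 0 := fun k hk j => by
    have := m1 k
    rw [hk, Finset.sum_eq_zero_iff_of_nonneg (fun i _ => m0 k i)] at this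
    exact this j (Finset.mem_univ _)
  have A : ∀ i k, ∑ j, l i k * m k j / T k = l i k := fun i k => by
    rw [← Finset.sum_div, ← Finset.mul_sum, m1]
    by_cases hk : T k = 0
    · simp [hk, hl0 k hk]
    · field_simp
  have B : ∀ k j, ∑ i, l i k * m k j / T k = m k j := fun k j => by
    rw [← Finset.sum_div, ← Finset.sum_mul, l2]
    by_cases hk : T k = 0
    · simp [hk, hm0 k hk]
    · field_simp
  have N : ∀ i k j, 0 ≤ l i k * m k j / T k := fun i k j =>
    div_nonneg (mul_nonneg (l0 i k) (m0 k j)) (hT k)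
  have hc : IsCpl P Q (fun i j => ∑ k, l i k * m k j / T k) := by
    refine ⟨fun i j => Finset.sum_nonneg fun k _ => N i k j, fun i => ?_, fun j => ?_⟩
    · rw [Finset.sum_comm]
      simp_rw [A, l1]
    · rw [Finset.sum_comm]
      simp_rw [B, m2]
  refine (W1_le hd hc).trans ?_
  calc ∑ i, ∑ j, (∑ k, l i k * m k j / T k) * d i j
      ≤ ∑ i, ∑ j, ∑ k, ((l i k * m k j / T k) * e i k + (l i k * m k j / T k) * f k j) := by
        refine Finset.sum_le_sum fun i _ => Finset.sum_le_sum fun j _ => ?_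
        rw [Finset.sum_mul]
        refine Finset.sum_le_sum fun k _ => ?_
        rw [← mul_add]
        exact mul_le_mul_of_nonneg_left (h i j k) (N i k j)
    _ = (∑ i, ∑ j, ∑ k, (l i k * m k j / T k) * e i k)
        + ∑ i, ∑ j, ∑ k, (l i k * m k j / T k) * f k j := by
        simp_rw [Finset.sum_add_distrib]
    _ = (∑ i, ∑ k, l i k * e i k) + ∑ k, ∑ j, m k j * f k j := by
        congr 1
        · refine Finset.sum_congr rfl fun i _ => ?_
          rw [Finset.sum_comm]
          simp_rw [← Finset.sum_mul, A]
        · rw [Finset.sum_comm, Finset.sum_comm (f := fun k j => m k j * f k j)]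
          refine Finset.sum_congr rfl fun j _ => ?_
          rw [Finset.sum_comm]
          simp_rw [← Finset.sum_mul, B]
    _ = (∑ k, ∑ j, m k j * f k j) + ∑ i, ∑ k, l i k * e i k := add_comm _ _

theorem H_le {X Y : Type*} [Finite X] [Finite Y] [Nonempty X] {c : X → Y → ℝ} {b : ℝ}
    (h1 : ∀ x, ∃ y, c x y ≤ b) (h2 : ∃ x, ∀ y, c x y ≤ b) :
    max (⨆ a, ⨅ a', c a a') (⨅ a, ⨆ a', c a a') ≤ b := by
  refine max_le (ciSup_le fun x => ?_) ?_
  · obtain ⟨y, hy⟩ := h1 x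
    exact (ciInf_le (Set.finite_range _).bddBelow y).trans hy
  · obtain ⟨x, hx⟩ := h2
    obtain ⟨y, -⟩ := h1 x
    have : Nonempty Y := ⟨y⟩
    exact (ciInf_le (Set.finite_range _).bddBelow x).trans (ciSup_le hx)

theorem H_spec {X Y : Type*} [Finite X] [Finite Y] [Nonempty X] [Nonempty Y] (c : X → Y → ℝ) :
    (∀ x, ∃ y, c x y ≤ max (⨆ a, ⨅ a', c a a') (⨅ a, ⨆ a', c a a')) ∧
    (∃ x, ∀ y, c x y ≤ max (⨆ a, ⨅ a', c a a') (⨅ a, ⨆ a', c a a')) := by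
  constructor
  · intro x
    obtain ⟨y, hy⟩ := exists_eq_ciInf_of_finite (f := c x)
    refine ⟨y, le_max_of_le_left ?_⟩
    rw [hy]
    exact le_ciSup (f := fun a => ⨅ a', c a a') (Set.finite_range _).bddAbove x
  · obtain ⟨x, hx⟩ := exists_eq_ciInf_of_finite (f := fun a => ⨆ a', c a a')
    refine ⟨x, fun y => le_max_of_le_right ?_⟩
    rw [← hx]
    exact le_ciSup (f := c x) (Set.finite_range _).bddAbove y

theorem iter_bound {X U Y V : Type*} [Fintype X] [Fintype U] [Fintype Y] [Fintype V]
    [Nonempty U] [Nonempty V]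
    (M : FinMDP X U) (N : FinMDP Y V) (γ Rbar : ℝ)
    (hγ0 : 0 ≤ γ) (hγ1 : γ < 1)
    (hM : ∀ s a, 0 ≤ M.R s a ∧ M.R s a ≤ Rbar)
    (hN : ∀ s a, 0 ≤ N.R s a ∧ N.R s a ≤ Rbar) (hRbar : 0 < Rbar) (n : ℕ) :
    ∀ s s', 0 ≤ (gbsmF M N γ)^[n] (fun _ _ => 0) s s' ∧
      (gbsmF M N γ)^[n] (fun _ _ => 0) s s' ≤ Rbar / (1 - γ) := by
  have hp : 0 < 1 - γ := by linarith
  induction n with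
  | zero => exact fun s s' => ⟨le_rfl, (div_pos hRbar hp).le⟩
  | succ n ih =>
    intro s s'
    rw [Function.iterate_succ_apply']
    set d := (gbsmF M N γ)^[n] (fun _ _ => 0)
    have hu : ∀ a a', gbsmDelta M N γ d s a s' a' ≤ Rbar / (1 - γ) := fun a a' => by
      have h1 : W1 (M.P s a) (N.P s' a') d ≤ Rbar / (1 - γ) :=
        W1_le_const (M.P_nonneg s a) (N.P_nonneg s' a') (M.P_sum s a) (N.P_sum s' a')
          (fun i j => (ih i j).1) (fun i j => (ih i j).2)
      have h2 : |M.R s a - N.R s' a'| ≤ Rbar := by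
        rw [abs_le]
        constructor <;> linarith [hM s a, hN s' a', (hM s a).1, (hM s a).2, (hN s' a').1, (hN s' a').2]
      have h3 : Rbar / (1 - γ) = Rbar + γ * (Rbar / (1 - γ)) := by field_simp; ring
      unfold gbsmDelta
      rw [h3]
      exact add_le_add h2 (mul_le_mul_of_nonneg_left h1 hγ0)
    constructor
    · obtain ⟨x, hx⟩ := (H_spec (fun a a' => gbsmDelta M N γ d s a s' a')).2
      exact le_trans (add_nonneg (abs_nonneg _) (mul_nonneg hγ0 (W1_nonneg fun i j => (ih i j).1)))
        (hx (Classical.arbitrary V))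
    · exact H_le (fun x => ⟨Classical.arbitrary V, hu _ _⟩) ⟨Classical.arbitrary U, fun y => hu _ _⟩

/-- inter-MDP triangle inequality of the GBSM. -/
theorem gbsm_triangle
    {S₃ A₃ : Type*} [Fintype S₃] [Fintype A₃]
    [Nonempty S₁] [Nonempty A₁] [Nonempty S₂] [Nonempty A₂]
    [Nonempty S₃] [Nonempty A₃]
    (M₁ : FinMDP S₁ A₁) (M₂ : FinMDP S₂ A₂) (M₃ : FinMDP S₃ A₃) (γ Rbar : ℝ)
    (hγ0 : 0 ≤ γ) (hγ1 : γ < 1) (hRbar : 0 < Rbar)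
    (hR₁ : ∀ s a, 0 ≤ M₁.R s a ∧ M₁.R s a ≤ Rbar)
    (hR₂ : ∀ s a, 0 ≤ M₂.R s a ∧ M₂.R s a ≤ Rbar)
    (hR₃ : ∀ s a, 0 ≤ M₃.R s a ∧ M₃.R s a ≤ Rbar) :
    ∀ (s : S₁) (s' : S₂) (s'' : S₃),
      gbsm M₁ M₂ γ s s' ≤ gbsm M₁ M₃ γ s s'' + gbsm M₃ M₂ γ s'' s' := by
  have key : ∀ n : ℕ, ∀ (s : S₁) (s' : S₂) (s'' : S₃),
      (gbsmF M₁ M₂ γ)^[n] (fun _ _ => 0) s s' ≤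
        (gbsmF M₁ M₃ γ)^[n] (fun _ _ => 0) s s'' + (gbsmF M₃ M₂ γ)^[n] (fun _ _ => 0) s'' s' := by
    intro n
    induction n with
    | zero => intro s s' s''; simp
    | succ n ih =>
      intro s s' s''
      have hb := iter_bound M₁ M₂ γ Rbar hγ0 hγ1 hR₁ hR₂ hRbar n
      simp only [Function.iterate_succ_apply']
      set d := (gbsmF M₁ M₂ γ)^[n] (fun _ _ => 0)
      set e := (gbsmF M₁ M₃ γ)^[n] (fun _ _ => 0)
      set f := (gbsmF M₃ M₂ γ)^[n] (fun _ _ => 0)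
      have ht : ∀ a b c, gbsmDelta M₁ M₂ γ d s a s' b ≤
          gbsmDelta M₁ M₃ γ e s a s'' c + gbsmDelta M₃ M₂ γ f s'' c s' b := fun a b c => by
        have h1 := mul_le_mul_of_nonneg_left (W1_triangle (M₁.P_nonneg s a) (M₂.P_nonneg s' b)
          (M₃.P_nonneg s'' c) (M₁.P_sum s a) (M₂.P_sum s' b) (M₃.P_sum s'' c)
          (fun i j => (hb i j).1) ih) hγ0
        have h2 := abs_sub_le (M₁.R s a) (M₃.R s'' c) (M₂.R s' b)
        unfold gbsmDelta
        linarith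
      obtain ⟨p1, x0, p2⟩ := H_spec (fun a c => gbsmDelta M₁ M₃ γ e s a s'' c)
      obtain ⟨q1, z0, q2⟩ := H_spec (fun c b => gbsmDelta M₃ M₂ γ f s'' c s' b)
      refine H_le (fun x => ?_) ⟨x0, fun y => ?_⟩
      · obtain ⟨z, hz⟩ := p1 x
        obtain ⟨y, hy⟩ := q1 z
        exact ⟨y, (ht x y z).trans (add_le_add hz hy)⟩
      · exact (ht x0 y z0).trans (add_le_add (p2 z0) (q2 y))
  intro s s' s''
  refine ciSup_le fun n => (key n s s' s'').trans (add_le_add ?_ ?_)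
  · refine le_ciSup (f := fun n => (gbsmF M₁ M₃ γ)^[n] (fun _ _ => 0) s s'') ⟨Rbar / (1 - γ), ?_⟩ n
    rintro _ ⟨m, rfl⟩
    exact (iter_bound M₁ M₃ γ Rbar hγ0 hγ1 hR₁ hR₃ hRbar m s s'').2
  · refine le_ciSup (f := fun n => (gbsmF M₃ M₂ γ)^[n] (fun _ _ => 0) s'' s') ⟨Rbar / (1 - γ), ?_⟩ n
    rintro _ ⟨m, rfl⟩
    exact (iter_bound M₃ M₂ γ Rbar hγ0 hγ1 hR₃ hR₂ hRbar m s'' s').2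

end
end

section
/- Let M₁ = ⟨S, A, P₁, R₁, γ⟩ and M₂ = ⟨S, A, P₂, R₂, γ⟩ be finite MDPs sharing the same state space S and action space A, and let d^{1-2} be their GBSM. Define δ_TV((s,a),(s',a')) = |R₁(s,a) − R₂(s',a')| + (γ·R̄/(1−γ))·TV(P₁(·|s,a), P₂(·|s',a')), where TV(P,Q) = (1/2)·Σ_{s∈S} |P(s) − Q(s)|. Then max_{s∈S} d^{1-2}(s,s) ≤ (1/(1−γ))·max_{s∈S} H(X_s, X_s; δ_TV). -/
open scoped BigOperators

noncomputable section

variable {S₁ A₁ S₂ A₂ : Type*} [Fintype S₁] [Fintype A₁] [Fintype S₂] [Fintype A₂]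

/-- `δ_TV((s,a),(s',a')) = |R₁(s,a) − R₂(s',a')| + (γ·R̄/(1−γ))·TV(P₁(·|s,a), P₂(·|s',a'))`. -/
def deltaTV {S A : Type*} [Fintype S] [Fintype A]
    (M₁ M₂ : FinMDP S A) (γ Rbar : ℝ) (s : S) (a : A) (s' : S) (a' : A) : ℝ :=
  |M₁.R s a - M₂.R s' a'| +
    γ * Rbar / (1 - γ) * ((1 / 2) * ∑ t, |M₁.P s a t - M₂.P s' a' t|)

theorem aux_inf {ι : Type*} [Finite ι] [Nonempty ι] (f g : ι → ℝ) (k : ℝ)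
    (h : ∀ i, f i ≤ g i + k) : (⨅ i, f i) ≤ (⨅ i, g i) + k := by
  obtain ⟨i, hi⟩ := exists_eq_ciInf_of_finite (f := g)
  rw [← hi]
  exact (ciInf_le (Set.finite_range f).bddBelow i).trans (h i)

theorem aux_sup {ι : Type*} [Finite ι] [Nonempty ι] (f g : ι → ℝ) (k : ℝ)
    (h : ∀ i, f i ≤ g i + k) : (⨆ i, f i) ≤ (⨆ i, g i) + k := by
  refine ciSup_le fun i => (h i).trans ?_
  have := le_ciSup (Set.finite_range g).bddAbove i
  linarith

theorem aux_H {ι : Type*} [Finite ι] [Nonempty ι] (f g : ι → ι → ℝ) (k : ℝ)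
    (h : ∀ i j, f i j ≤ g i j + k) :
    max (⨆ i, ⨅ j, f i j) (⨅ i, ⨆ j, f i j) ≤
      max (⨆ i, ⨅ j, g i j) (⨅ i, ⨆ j, g i j) + k := by
  have h1 : (⨆ i, ⨅ j, f i j) ≤ (⨆ i, ⨅ j, g i j) + k :=
    aux_sup _ _ _ fun i => aux_inf _ _ _ (h i)
  have h2 : (⨅ i, ⨆ j, f i j) ≤ (⨅ i, ⨆ j, g i j) + k :=
    aux_inf _ _ _ fun i => aux_sup _ _ _ (h i)
  rw [max_add_add_right _ _ k |>.symm]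
  exact max_le_max h1 h2

theorem aux_W1_nonneg {S : Type*} [Fintype S] (P Q : S → ℝ) (d : S → S → ℝ)
    (hd : ∀ i j, 0 ≤ d i j) : 0 ≤ W1 P Q d := by
  refine Real.sInf_nonneg ?_
  rintro c ⟨lam, h0, -, -, rfl⟩
  exact Finset.sum_nonneg fun i _ => Finset.sum_nonneg fun j _ => mul_nonneg (h0 i j) (hd i j)

theorem aux_W1_le {S : Type*} [Fintype S] (P Q : S → ℝ) (d lam : S → S → ℝ)
    (hd : ∀ i j, 0 ≤ d i j) (h0 : ∀ i j, 0 ≤ lam i j) (h1 : ∀ i, ∑ j, lam i j = P i)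
    (h2 : ∀ j, ∑ i, lam i j = Q j) : W1 P Q d ≤ ∑ i, ∑ j, lam i j * d i j := by
  refine csInf_le ⟨0, ?_⟩ ⟨lam, h0, h1, h2, rfl⟩
  rintro c ⟨lam, h0, -, -, rfl⟩
  exact Finset.sum_nonneg fun i _ => Finset.sum_nonneg fun j _ => mul_nonneg (h0 i j) (hd i j)

theorem aux_W1_const {S : Type*} [Fintype S] (P Q : S → ℝ) (d : S → S → ℝ) (C : ℝ)
    (hP : ∀ i, 0 ≤ P i) (hQ : ∀ i, 0 ≤ Q i) (hP1 : ∑ i, P i = 1) (hQ1 : ∑ i, Q i = 1)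
    (hd : ∀ i j, 0 ≤ d i j) (hC : ∀ i j, d i j ≤ C) : W1 P Q d ≤ C := by
  refine (aux_W1_le P Q d (fun i j => P i * Q j) hd
    (fun i j => mul_nonneg (hP i) (hQ j)) ?_ ?_).trans ?_
  · intro i
    rw [← Finset.mul_sum, hQ1, mul_one]
  · intro j
    rw [← Finset.sum_mul, hP1, one_mul]
  · calc ∑ i, ∑ j, P i * Q j * d i j ≤ ∑ i, ∑ j, P i * Q j * C :=
        Finset.sum_le_sum fun i _ => Finset.sum_le_sum fun j _ =>
          mul_le_mul_of_nonneg_left (hC i j) (mul_nonneg (hP i) (hQ j))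
      _ = C := by
        simp only [← Finset.sum_mul, ← Finset.mul_sum, hP1, hQ1, one_mul]

theorem aux_W1_tv {S : Type*} [Fintype S] (P Q : S → ℝ) (d : S → S → ℝ) (C D : ℝ)
    (hP : ∀ i, 0 ≤ P i) (hQ : ∀ i, 0 ≤ Q i) (hP1 : ∑ i, P i = 1) (hQ1 : ∑ i, Q i = 1)
    (hd : ∀ i j, 0 ≤ d i j) (hC : ∀ i j, d i j ≤ C) (hD0 : 0 ≤ D) (hD : ∀ i, d i i ≤ D) :
    W1 P Q d ≤ C * ((1 / 2) * ∑ i, |P i - Q i|) + D := by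
  classical
  set t : ℝ := (1 / 2) * ∑ i, |P i - Q i| with ht
  have hmin : ∀ i, min (P i) (Q i) = (1 / 2) * (P i + Q i - |P i - Q i|) := by
    intro i
    rcases le_total (P i) (Q i) with h | h
    · rw [min_eq_left h, abs_of_nonpos (by linarith)]; ring
    · rw [min_eq_right h, abs_of_nonneg (by linarith)]; ring
  have hm : ∑ i, min (P i) (Q i) = 1 - t := by
    simp only [hmin]
    rw [← Finset.mul_sum, Finset.sum_sub_distrib, Finset.sum_add_distrib, hP1, hQ1, ht]
    ring
  set p : S → ℝ := fun i => P i - min (P i) (Q i) with hp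
  set q : S → ℝ := fun i => Q i - min (P i) (Q i) with hq
  have hp0 : ∀ i, 0 ≤ p i := fun i => sub_nonneg.2 (min_le_left _ _)
  have hq0 : ∀ i, 0 ≤ q i := fun i => sub_nonneg.2 (min_le_right _ _)
  have hps : ∑ i, p i = t := by
    rw [hp, Finset.sum_sub_distrib, hm, hP1]; ring
  have hqs : ∑ i, q i = t := by
    rw [hq, Finset.sum_sub_distrib, hm, hQ1]; ring
  have ht0 : 0 ≤ t := hps ▸ Finset.sum_nonneg fun i _ => hp0 i
  have hpt : ∀ i, p i * t / t = p i := by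
    intro i
    by_cases h : t = 0
    · have : p i = 0 :=
        (Finset.sum_eq_zero_iff_of_nonneg fun i _ => hp0 i).1 (hps.trans h) i (Finset.mem_univ _)
      simp [this]
    · field_simp
  have hqt : ∀ i, t * q i / t = q i := by
    intro i
    by_cases h : t = 0
    · have : q i = 0 :=
        (Finset.sum_eq_zero_iff_of_nonneg fun i _ => hq0 i).1 (hqs.trans h) i (Finset.mem_univ _)
      simp [this]
    · field_simp
  have hm0 : ∀ i, 0 ≤ min (P i) (Q i) := fun i => le_min (hP i) (hQ i)
  refine (aux_W1_le P Q d
    (fun i j => (if i = j then min (P i) (Q i) else 0) + p i * q j / t) hd ?_ ?_ ?_).trans ?_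
  · intro i j
    have h1 : 0 ≤ p i * q j / t := div_nonneg (mul_nonneg (hp0 i) (hq0 j)) ht0
    have h2 := hm0 i
    split_ifs <;> linarith
  · intro i
    rw [Finset.sum_add_distrib, ← Finset.sum_div, ← Finset.mul_sum, hqs, hpt]
    simp [hp]
  · intro j
    rw [Finset.sum_add_distrib, ← Finset.sum_div, ← Finset.sum_mul, hps, hqt]
    simp [hq]
  · have e1 : ∀ i, ∑ j, ((if i = j then min (P i) (Q i) else 0) + p i * q j / t) * d i j
        ≤ min (P i) (Q i) * D + p i * C := by
      intro i
      simp only [add_mul]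
      rw [Finset.sum_add_distrib]
      refine add_le_add ?_ ?_
      · simp only [ite_mul, zero_mul, Finset.sum_ite_eq, Finset.mem_univ, if_true]
        exact mul_le_mul_of_nonneg_left (hD i) (hm0 i)
      · calc ∑ j, p i * q j / t * d i j ≤ ∑ j, p i * q j / t * C :=
            Finset.sum_le_sum fun j _ => mul_le_mul_of_nonneg_left (hC i j)
              (div_nonneg (mul_nonneg (hp0 i) (hq0 j)) ht0)
          _ = p i * C := by
            rw [← Finset.sum_mul, ← Finset.sum_div, ← Finset.mul_sum, hqs, hpt]
    refine (Finset.sum_le_sum fun i _ => e1 i).trans ?_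
    rw [Finset.sum_add_distrib, ← Finset.sum_mul, ← Finset.sum_mul, hm, hps]
    nlinarith [mul_nonneg ht0 hD0]

/-- distance bound on identical spaces. -/
theorem gbsm_tv_bound {S A : Type*} [Fintype S] [Nonempty S] [Fintype A] [Nonempty A]
    (M₁ M₂ : FinMDP S A) (γ Rbar : ℝ)
    (hγ0 : 0 ≤ γ) (hγ1 : γ < 1) (hRbar : 0 < Rbar)
    (hR₁ : ∀ s a, 0 ≤ M₁.R s a ∧ M₁.R s a ≤ Rbar)
    (hR₂ : ∀ s a, 0 ≤ M₂.R s a ∧ M₂.R s a ≤ Rbar) :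
    (⨆ s : S, gbsm M₁ M₂ γ s s) ≤
      (1 / (1 - γ)) *
        ⨆ s : S,
          max (⨆ a : A, ⨅ a' : A, deltaTV M₁ M₂ γ Rbar s a s a')
              (⨅ a : A, ⨆ a' : A, deltaTV M₁ M₂ γ Rbar s a s a') := by
  have hg : 0 < 1 - γ := by linarith
  set B : ℝ := ⨆ s : S,
          max (⨆ a : A, ⨅ a' : A, deltaTV M₁ M₂ γ Rbar s a s a')
              (⨅ a : A, ⨆ a' : A, deltaTV M₁ M₂ γ Rbar s a s a') with hB
  have hBs : ∀ s : S, max (⨆ a : A, ⨅ a' : A, deltaTV M₁ M₂ γ Rbar s a s a')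
              (⨅ a : A, ⨆ a' : A, deltaTV M₁ M₂ γ Rbar s a s a') ≤ B := fun s =>
    le_ciSup (f := fun s : S => max (⨆ a : A, ⨅ a' : A, deltaTV M₁ M₂ γ Rbar s a s a')
              (⨅ a : A, ⨆ a' : A, deltaTV M₁ M₂ γ Rbar s a s a'))
      (Set.finite_range _).bddAbove s
  have hB0 : 0 ≤ B := by
    refine Real.iSup_nonneg fun s => le_max_of_le_left ?_
    refine Real.iSup_nonneg fun a => Real.iInf_nonneg fun a' => ?_
    unfold deltaTV
    have h1 : 0 ≤ ∑ t, |M₁.P s a t - M₂.P s a' t| := Finset.sum_nonneg fun _ _ => abs_nonneg _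
    positivity
  set D : ℝ := 1 / (1 - γ) * B with hDdef
  have hD0 : 0 ≤ D := by positivity
  have hDfix : B + γ * D = D := by rw [hDdef]; field_simp; ring
  set C : ℝ := Rbar / (1 - γ) with hCdef
  have hCfix : Rbar + γ * C = C := by rw [hCdef]; field_simp; ring
  have hC0 : 0 ≤ C := by positivity
  have key : ∀ n : ℕ, (∀ s s', 0 ≤ (gbsmF M₁ M₂ γ)^[n] (fun _ _ => 0) s s') ∧
      (∀ s s', (gbsmF M₁ M₂ γ)^[n] (fun _ _ => 0) s s' ≤ C) ∧
      (∀ s, (gbsmF M₁ M₂ γ)^[n] (fun _ _ => 0) s s ≤ D) := by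
    intro n
    induction n with
    | zero => exact ⟨fun _ _ => le_rfl, fun _ _ => hC0, fun _ => hD0⟩
    | succ n ih =>
      rw [Function.iterate_succ_apply']
      generalize (gbsmF M₁ M₂ γ)^[n] (fun _ _ => 0) = d at ih
      obtain ⟨i0, iC, iD⟩ := ih
      refine ⟨fun s s' => ?_, fun s s' => ?_, fun s => ?_⟩
      · refine le_max_of_le_left (Real.iSup_nonneg fun a => Real.iInf_nonneg fun a' => ?_)
        exact add_nonneg (abs_nonneg _) (mul_nonneg hγ0 (aux_W1_nonneg _ _ _ i0))
      · have := aux_H (fun a a' => gbsmDelta M₁ M₂ γ d s a s' a') (fun _ _ => 0) C ?_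
        · simpa [gbsmF] using this
        · intro a a'
          have h1 : |M₁.R s a - M₂.R s' a'| ≤ Rbar := by
            have := hR₁ s a
            have := hR₂ s' a'
            rw [abs_le]; constructor <;> linarith
          have h2 := mul_le_mul_of_nonneg_left (aux_W1_const (M₁.P s a) (M₂.P s' a') d C
            (M₁.P_nonneg s a) (M₂.P_nonneg s' a') (M₁.P_sum s a) (M₂.P_sum s' a') i0 iC) hγ0
          unfold gbsmDelta
          linarith
      · have := aux_H (fun a a' => gbsmDelta M₁ M₂ γ d s a s a')
          (fun a a' => deltaTV M₁ M₂ γ Rbar s a s a') (γ * D) ?_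
        · have h2 := hBs s
          unfold gbsmF
          linarith
        · intro a a'
          have h2 := mul_le_mul_of_nonneg_left (aux_W1_tv (M₁.P s a) (M₂.P s a') d C D
            (M₁.P_nonneg s a) (M₂.P_nonneg s a') (M₁.P_sum s a) (M₂.P_sum s a') i0 iC hD0 iD) hγ0
          have h3 : γ * Rbar / (1 - γ) = γ * C := by rw [hCdef]; ring
          unfold gbsmDelta deltaTV
          rw [h3]
          linarith
  exact ciSup_le fun s => ciSup_le fun n => (key n).2.2 s

end
end

section
/- Let S be a nonempty finite set, P and Q probability vectors on S, and d : S × S → ℝ a cost function. Let TV(P,Q) = (1/2)·Σ_{s∈S} |P(s) − Q(s)|. Then W₁(P,Q;d) ≤ TV(P,Q)·max_{s,s'∈S} d(s,s') + (1 − TV(P,Q))·max_{s∈S} d(s,s). -/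
open scoped BigOperators

noncomputable section

/-- total-variation bound on the Wasserstein distance. -/
theorem W1_le_tv_bound {S : Type*} [Fintype S] [Nonempty S]
    (P Q : S → ℝ)
    (hP0 : ∀ i, 0 ≤ P i) (hP1 : ∑ i, P i = 1)
    (hQ0 : ∀ j, 0 ≤ Q j) (hQ1 : ∑ j, Q j = 1)
    (d : S → S → ℝ) :
    W1 P Q d ≤
      ((1 / 2) * ∑ s, |P s - Q s|) * (⨆ s : S, ⨆ s' : S, d s s') +
        (1 - (1 / 2) * ∑ s, |P s - Q s|) * ⨆ s : S, d s s := by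
  classical
  set T : ℝ := (1 / 2) * ∑ s, |P s - Q s| with hT
  set M : ℝ := ⨆ s : S, ⨆ s' : S, d s s' with hM
  set D : ℝ := ⨆ s : S, d s s with hD
  have hdM : ∀ i j, d i j ≤ M := fun i j =>
    (le_ciSup (Set.finite_range (fun s' => d i s')).bddAbove j).trans
      (le_ciSup (Set.finite_range (fun s => ⨆ s' : S, d s s')).bddAbove i)
  have hdD : ∀ i, d i i ≤ D := fun i =>
    le_ciSup (Set.finite_range (fun s => d s s)).bddAbove i
  let m : S → ℝ := fun i => min (P i) (Q i)
  let a : S → ℝ := fun i => P i - m i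
  let b : S → ℝ := fun i => Q i - m i
  have hm0 : ∀ i, 0 ≤ m i := fun i => le_min (hP0 i) (hQ0 i)
  have ha0 : ∀ i, 0 ≤ a i := fun i => sub_nonneg.2 (min_le_left _ _)
  have hb0 : ∀ i, 0 ≤ b i := fun i => sub_nonneg.2 (min_le_right _ _)
  have hmeq : ∀ i, m i = (1/2) * (P i + Q i) - (1/2) * |P i - Q i| := by
    intro i
    simp only [m]
    rcases le_total (P i) (Q i) with h | h
    · rw [min_eq_left h, abs_of_nonpos (by linarith)]; ring
    · rw [min_eq_right h, abs_of_nonneg (by linarith)]; ring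
  have hmsum : ∑ i, m i = 1 - T := by
    simp_rw [hmeq]
    rw [Finset.sum_sub_distrib, ← Finset.mul_sum, ← Finset.mul_sum, Finset.sum_add_distrib,
      hP1, hQ1, hT]
    ring
  have hasum : ∑ i, a i = T := by
    simp only [a]; rw [Finset.sum_sub_distrib, hP1, hmsum]; ring
  have hbsum : ∑ i, b i = T := by
    simp only [b]; rw [Finset.sum_sub_distrib, hQ1, hmsum]; ring
  have hT0 : 0 ≤ T := hasum ▸ Finset.sum_nonneg (fun i _ => ha0 i)
  have haT : ∀ i, a i * T / T = a i := by
    intro i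
    by_cases h : T = 0
    · have := (Finset.sum_eq_zero_iff_of_nonneg (fun i _ => ha0 i)).1 (hasum.trans h) i
        (Finset.mem_univ i)
      simp [this]
    · field_simp
  have hbT : ∀ i, T * b i / T = b i := by
    intro i
    by_cases h : T = 0
    · have := (Finset.sum_eq_zero_iff_of_nonneg (fun i _ => hb0 i)).1 (hbsum.trans h) i
        (Finset.mem_univ i)
      simp [this]
    · field_simp
  have hrow : ∀ i, ∑ j, a i * b j / T = a i := by
    intro i
    rw [← Finset.sum_div, ← Finset.mul_sum, hbsum, haT]
  have hcol : ∀ j, ∑ i, a i * b j / T = b j := by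
    intro j
    rw [← Finset.sum_div, ← Finset.sum_mul, hasum, hbT]
  have hab0 : ∀ i j, 0 ≤ a i * b j / T := fun i j =>
    div_nonneg (mul_nonneg (ha0 i) (hb0 j)) hT0
  let lam : S → S → ℝ := fun i j => (if i = j then m i else 0) + a i * b j / T
  have hbdd : BddBelow { c : ℝ | ∃ lam : S → S → ℝ,
      (∀ i j, 0 ≤ lam i j) ∧ (∀ i, ∑ j, lam i j = P i) ∧
      (∀ j, ∑ i, lam i j = Q j) ∧ c = ∑ i, ∑ j, lam i j * d i j } := by
    refine ⟨∑ i, ∑ j, -(P i * |d i j|), ?_⟩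
    rintro c ⟨l, hl0, hlP, -, rfl⟩
    refine Finset.sum_le_sum fun i _ => Finset.sum_le_sum fun j _ => ?_
    have h1 : l i j ≤ P i := by
      rw [← hlP i]
      exact Finset.single_le_sum (fun j _ => hl0 i j) (Finset.mem_univ j)
    have h2 := mul_le_mul_of_nonneg_right h1 (abs_nonneg (d i j))
    have h3 := mul_le_mul_of_nonneg_left (neg_abs_le (d i j)) (hl0 i j)
    linarith
  have hcost : ∑ i, ∑ j, lam i j * d i j ≤ T * M + (1 - T) * D := by
    have h1 : ∀ i, ∑ j, lam i j * d i j ≤ m i * D + a i * M := by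
      intro i
      have e : ∑ j, lam i j * d i j = m i * d i i + ∑ j, a i * b j / T * d i j := by
        simp [lam, add_mul, Finset.sum_add_distrib]
      rw [e]
      have h2 : ∑ j, a i * b j / T * d i j ≤ ∑ j, a i * b j / T * M :=
        Finset.sum_le_sum fun j _ => mul_le_mul_of_nonneg_left (hdM i j) (hab0 i j)
      rw [← Finset.sum_mul, hrow] at h2
      have h3 := mul_le_mul_of_nonneg_left (hdD i) (hm0 i)
      linarith
    refine (Finset.sum_le_sum fun i _ => h1 i).trans ?_
    rw [Finset.sum_add_distrib, ← Finset.sum_mul, ← Finset.sum_mul, hmsum, hasum]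
    linarith
  refine (csInf_le hbdd ⟨lam, ?_, ?_, ?_, rfl⟩).trans hcost
  · intro i j
    refine add_nonneg ?_ (hab0 i j)
    split_ifs
    · exact hm0 i
    · exact le_rfl
  · intro i
    simp only [lam]
    rw [Finset.sum_add_distrib, hrow]
    simp [a]
  · intro j
    simp only [lam]
    rw [Finset.sum_add_distrib, hcol]
    simp [b]

end
end
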